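/- Let (U, d) be a metric space, μ a Borel probability measure on U, g : U → U a Borel map, ℓ : U → (0, ∞) a measurable function, and (μ_x)_{x ∈ U} a family of Borel probability measures that disintegrates μ, i.e. μ(S) = ∫ μ_x(S) dμ(x) for every Borel set S. Let C ≥ 1, b > 0, k > 0, c ∈ [0, 1/2] be constants and (Γ(x))_{x ∈ U} a family of Borel sets with μ_x(Γ(x)) = 1 for every x. Assume: (i) μ({x : ℓ(x) < ε}) ≤ C·ε^b for every ε ∈ (0,1); (ii) for every x, d(g(y), g(y')) ≤ c·d(y, y') for all y, y' ∈ Γ(x); (iii) for every x, every δ > 0 and every Borel set S ⊆ U with diam(S) ≤ δ, μ_x(S) ≤ C·(δ/ℓ(x))^k. Then for every ε ∈ (0,1): μ({z ∈ U : d(g(z), z) ≤ ε}) ≤ C·(1 + 4^k)·ε^{b·k/(b + k)}. -/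

import Mathlib

open MeasureTheory Metric

open Cardinal Ordinal in
/-- Initial segments of `ω₁` are countable. -/
theorem rb_countable_Iio (a : Ordinal.{0}) (ha : a < Ordinal.omega 1) :
    (Set.Iio a).Countable := by
  rw [Cardinal.countable_iff_lt_aleph_one, Ordinal.mk_Iio_ordinal]
  rw [← Cardinal.ord_aleph, Cardinal.lt_ord] at ha
  have h := Cardinal.lift_lt.{0, 1}.2 ha
  simpa using h

open Cardinal Ordinal in
theorem rb_uncountable : ¬ (Set.Iio (Ordinal.omega 1 : Ordinal.{0})).Countable := by
  rw [Cardinal.countable_iff_lt_aleph_one, Ordinal.mk_Iio_ordinal]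
  simp

/-- Ulam: a finite measure admits no diffuse total push-forward to `ω₁`. -/
theorem rb_ulam {Ω : Type*} [MeasurableSpace Ω] (μ : Measure Ω) [IsFiniteMeasure μ]
    (r : Ω → Ordinal.{0}) (hr : ∀ x, r x < Ordinal.omega 1)
    (hm : ∀ A : Set Ordinal.{0}, MeasurableSet (r ⁻¹' A)) :
    ∃ a < (Ordinal.omega 1 : Ordinal.{0}), μ {x | a < r x} = 0 := by
  by_contra hcon
  push Not at hcon
  have hf : ∀ β : Ordinal.{0}, ∃ f : Ordinal.{0} → ℕ,
      β < Ordinal.omega 1 → Set.InjOn f (Set.Iio β) := by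
    intro β
    by_cases hβ : β < Ordinal.omega 1
    · obtain ⟨f, hf⟩ := (Set.countable_iff_exists_injOn).1 (rb_countable_Iio β hβ)
      exact ⟨f, fun _ => hf⟩
    · exact ⟨fun _ => 0, fun h => absurd h hβ⟩
  choose f hf using hf
  let A : ℕ → Ordinal.{0} → Set Ω := fun n a => r ⁻¹' {β | a < β ∧ f β a = n}
  have hA : ∀ a : Set.Iio (Ordinal.omega 1 : Ordinal.{0}), ∃ n, 0 < μ (A n a) := by
    intro a
    by_contra h
    push Not at h
    apply hcon a a.2
    have : {x | (a : Ordinal) < r x} ⊆ ⋃ n, A n a := by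
      intro x hx
      exact Set.mem_iUnion.2 ⟨f (r x) a, hx, rfl⟩
    refine measure_mono_null this (measure_iUnion_null fun n => le_antisymm (h n) bot_le)
  choose n hn using hA
  have hcount : ∀ m, {a | n a = m}.Countable := by
    intro m
    have := Measure.countable_meas_pos_of_disjoint_iUnion (μ := μ)
      (As := fun a : Set.Iio (Ordinal.omega 1 : Ordinal.{0}) => A m a)
      (fun a => hm _) (by
        intro a b hab
        rw [Function.onFun, Set.disjoint_left]
        rintro x ⟨h1, h2⟩ ⟨h3, h4⟩
        exact hab (Subtype.ext (hf (r x) (hr x) h1 h3 (h2.trans h4.symm))))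
    refine this.mono ?_
    rintro a rfl
    exact hn a
  have : (Set.univ : Set (Set.Iio (Ordinal.omega 1 : Ordinal.{0}))).Countable := by
    refine (Set.countable_iUnion hcount).mono ?_
    intro a _
    exact Set.mem_iUnion.2 ⟨n a, rfl⟩
  exact rb_uncountable (Set.countable_coe_iff.1 (Set.countable_univ_iff.1 this))

/-- A first-centre map at scale `η`. -/
theorem rb_exists_center {U : Type*} [MetricSpace U] (η : ℝ) (hη : 0 < η) :
    ∃ p : U → U, (∀ z, dist z (p z) < η) ∧
      ∀ z j, WellOrderingRel j (p z) → η ≤ dist z j := by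
  have hwf : WellFounded (WellOrderingRel : U → U → Prop) := IsWellFounded.wf
  have hne : ∀ z : U, {j | dist z j < η}.Nonempty := fun z => ⟨z, by simpa using hη⟩
  refine ⟨fun z => hwf.min _ (hne z), fun z => hwf.min_mem _ (hne z), ?_⟩
  intro z j hj
  by_contra h
  exact hwf.not_lt_min {j | dist z j < η} (show j ∈ {j | dist z j < η} from lt_of_not_ge h) hj

theorem rb_open {U : Type*} [MetricSpace U] [MeasurableSpace U] [BorelSpace U]
    (η : ℝ) (p : U → U) (h1 : ∀ z, dist z (p z) < η)
    (h2 : ∀ z j, WellOrderingRel j (p z) → η ≤ dist z j)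
    (O : U → Set U) (hO : ∀ j, IsOpen (O j)) :
    MeasurableSet {z | z ∈ O (p z)} := by
  let d : ℕ → ℝ := fun n => 1 / ((n : ℝ) + 1)
  have hd : ∀ n, 0 < d n := fun n => Nat.one_div_pos_of_nat
  let G : ℕ → Set U := fun n => {z | dist z (p z) ≤ η - d n}
  -- separation
  have hsep' : ∀ n, ∀ z ∈ G n, ∀ w, WellOrderingRel (p z) (p w) → d n ≤ dist z w := by
    intro n z hz w hr
    have a := h2 w _ hr
    have b := dist_triangle_left w (p z) z
    have c : dist z (p z) ≤ η - d n := hz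
    linarith
  have hsep : ∀ n, ∀ z ∈ G n, ∀ w ∈ G n, dist z w < d n → p z = p w := by
    intro n z hz w hw hzw
    rcases trichotomous_of WellOrderingRel (p z) (p w) with h | h | h
    · linarith [hsep' n z hz w h]
    · exact h
    · linarith [hsep' n w hw z h, dist_comm z w]
  have hclosed : ∀ n, IsClosed (G n) := by
    intro n
    refine isClosed_of_closure_subset fun z hz => ?_
    rw [Metric.mem_closure_iff] at hz
    obtain ⟨w, hw, hzw⟩ := hz (d n / 2) (half_pos (hd n))
    have key : ∀ e > 0, ∃ v, dist z v < e ∧ dist v (p w) ≤ η - d n ∧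
        ∀ j, WellOrderingRel j (p w) → η ≤ dist v j := by
      intro e he
      obtain ⟨v, hv, hzv⟩ := hz (min e (d n / 2)) (lt_min he (half_pos (hd n)))
      have hvw : p v = p w := by
        apply hsep n v hv w hw
        have := dist_triangle_left v w z
        have := min_le_right e (d n / 2)
        linarith
      refine ⟨v, hzv.trans_le (min_le_left _ _), ?_, ?_⟩
      · rw [← hvw]; exact hv
      · rw [← hvw]; exact h2 v
    have hle : dist z (p w) ≤ η - d n := by
      refine le_of_forall_pos_le_add fun e he => ?_
      obtain ⟨v, hv, hv2, _⟩ := key e he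
      linarith [dist_triangle z v (p w)]
    have hge : ∀ j, WellOrderingRel j (p w) → η ≤ dist z j := by
      intro j hj
      refine le_of_forall_pos_le_add fun e he => ?_
      obtain ⟨v, hv, _, hv2⟩ := key e he
      linarith [dist_triangle_left v j z, hv2 j hj]
    have : p z = p w := by
      rcases trichotomous_of WellOrderingRel (p z) (p w) with h | h | h
      · linarith [hge _ h, h1 z]
      · exact h
      · linarith [h2 z _ h, hd n]
    change dist z (p z) ≤ η - d n
    rw [this]; exact hle
  have heq : {z | z ∈ O (p z)} =
      ⋃ n, (G n ∩ ⋃ w ∈ G n, (ball w (d n) ∩ O (p w))) := by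
    ext z
    simp only [Set.mem_setOf_eq, Set.mem_iUnion, Set.mem_inter_iff, mem_ball, exists_prop]
    constructor
    · intro hz
      obtain ⟨n, hn⟩ := exists_nat_one_div_lt (sub_pos.2 (h1 z))
      have hG : z ∈ G n := by
        change dist z (p z) ≤ η - 1 / ((n : ℝ) + 1)
        linarith
      exact ⟨n, hG, z, hG, by simpa using hd n, hz⟩
    · rintro ⟨n, hz, w, hw, hzw, hO⟩
      rw [hsep n z hz w hw hzw]; exact hO
  rw [heq]
  refine MeasurableSet.iUnion fun n => (hclosed n).measurableSet.inter ?_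
  exact (isOpen_biUnion fun w _ => isOpen_ball.inter (hO _)).measurableSet

theorem rb_rec {U : Type*} [MetricSpace U] [MeasurableSpace U] [BorelSpace U]
    (p : U → U)
    (hp : ∀ O : U → Set U, (∀ j, IsOpen (O j)) → MeasurableSet {z | z ∈ O (p z)})
    (i : Ordinal.{0}) : i < Ordinal.omega 1 →
    ∀ S : U → Set U,
      (∀ j, S j ∈ MeasurableSpace.generateMeasurableRec {s : Set U | IsOpen s} i) →
      MeasurableSet {z | z ∈ S (p z)} := by
  have hpre : ∀ J : Set U, MeasurableSet (p ⁻¹' J) := by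
    intro J
    have := hp (fun j => {_z | j ∈ J}) (fun j => isOpen_const)
    exact this
  induction i using WellFoundedLT.induction with
  | ind i ih =>
  intro hi S hS
  -- families of mixed lower rank
  have mixed : ∀ T : U → Set U,
      (∀ j, ∃ a < i, T j ∈ MeasurableSpace.generateMeasurableRec {s : Set U | IsOpen s} a) →
      MeasurableSet {z | z ∈ T (p z)} := by
    classical
    intro T hT
    choose a ha hTa using hT
    have heq : {z | z ∈ T (p z)} =
        ⋃ b ∈ Set.Iio i, {z | z ∈ (if a (p z) = b then T (p z) else ∅)} := by
      ext z
      simp only [Set.mem_setOf_eq, Set.mem_iUnion, exists_prop]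
      constructor
      · intro hz
        exact ⟨a (p z), ha _, by simpa using hz⟩
      · rintro ⟨b, _, hz⟩
        split_ifs at hz
        · exact hz
        · exact hz.elim
    rw [heq]
    refine MeasurableSet.biUnion (rb_countable_Iio i hi) fun b hb => ?_
    refine ih b hb (lt_trans hb hi) (fun j => if a j = b then T j else ∅) fun j => ?_
    split_ifs with h
    · rw [← h]; exact hTa j
    · exact MeasurableSpace.empty_mem_generateMeasurableRec _ _
  classical
  have hcase : ∀ j, IsOpen (S j) ∨
      (∃ T : Set U, (∃ a < i, T ∈ MeasurableSpace.generateMeasurableRec {s : Set U | IsOpen s} a)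
        ∧ S j = Tᶜ) ∨
      (∃ T : ℕ → Set U, (∀ n, ∃ a < i,
        T n ∈ MeasurableSpace.generateMeasurableRec {s : Set U | IsOpen s} a)
        ∧ S j = ⋃ n, T n) := by
    intro j
    have h := hS j
    unfold MeasurableSpace.generateMeasurableRec at h
    rcases h with ((h | h) | ⟨T, hT, h⟩) | ⟨T, h⟩
    · exact Or.inl h
    · rw [Set.mem_singleton_iff] at h
      rw [h]; exact Or.inl isOpen_empty
    · simp only [Set.mem_iUnion, exists_prop] at hT
      exact Or.inr (Or.inl ⟨T, hT, h.symm⟩)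
    · refine Or.inr (Or.inr ⟨fun n => (T n).1, fun n => ?_, h.symm⟩)
      have := (T n).2
      simpa only [Set.mem_iUnion, exists_prop] using this
  by_cases hi0 : i = 0
  · subst hi0
    refine hp S fun j => ?_
    rcases hcase j with h | ⟨T, ⟨a, ha, _⟩, _⟩ | ⟨T, hT, _⟩
    · exact h
    · exact absurd ha (not_lt_bot)
    · obtain ⟨a, ha, _⟩ := hT 0
      exact absurd ha (not_lt_bot)
  have hpos : 0 < i := pos_iff_ne_zero.2 hi0
  have hdef : ∃ a < i, (∅ : Set U) ∈
      MeasurableSpace.generateMeasurableRec {s : Set U | IsOpen s} a :=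
    ⟨0, hpos, MeasurableSpace.empty_mem_generateMeasurableRec _ _⟩
  have hcase2 : ∀ j, ∃ (A : Set U) (B : Set U) (D : ℕ → Set U) (q : Prop),
      IsOpen A ∧
      (∃ a < i, B ∈ MeasurableSpace.generateMeasurableRec {s : Set U | IsOpen s} a) ∧
      (∀ n, ∃ a < i, D n ∈ MeasurableSpace.generateMeasurableRec {s : Set U | IsOpen s} a) ∧
      S j = A ∪ (Bᶜ ∩ {_z | q}) ∪ ⋃ n, D n := by
    intro j
    rcases hcase j with h | ⟨T, hT, h⟩ | ⟨T, hT, h⟩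
    · exact ⟨S j, ∅, fun _ => ∅, False, h, hdef, fun _ => hdef, by simp⟩
    · exact ⟨∅, T, fun _ => ∅, True, isOpen_empty, hT, fun _ => hdef, by simp [h]⟩
    · exact ⟨∅, ∅, T, False, isOpen_empty, hdef, hT, by simp [h]⟩
  choose A B D q hA hB hD hSeq using hcase2
  have heq : {z | z ∈ S (p z)} = {z | z ∈ A (p z)} ∪ ({z | z ∈ B (p z)}ᶜ ∩ p ⁻¹' {j | q j}) ∪
      ⋃ n, {z | z ∈ D (p z) n} := by
    ext z
    have : z ∈ S (p z) ↔ z ∈ A (p z) ∪ ((B (p z))ᶜ ∩ {_z | q (p z)}) ∪ ⋃ n, D (p z) n := by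
      rw [← hSeq]
    simpa using this
  rw [heq]
  exact ((hp A hA).union ((mixed B hB).compl.inter (hpre _))).union
    (MeasurableSet.iUnion fun n => mixed (fun j => D j n) fun j => hD j n)

/-- A diagonal union of Borel sets along the centre map is null measurable. -/
theorem rb_null {U : Type*} [MetricSpace U] [MeasurableSpace U] [BorelSpace U]
    (μ : Measure U) [IsFiniteMeasure μ] (p : U → U)
    (hp : ∀ O : U → Set U, (∀ j, IsOpen (O j)) → MeasurableSet {z | z ∈ O (p z)})
    (S : U → Set U) (hS : ∀ j, MeasurableSet (S j)) :
    NullMeasurableSet {z | z ∈ S (p z)} μ := by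
  classical
  have hpre : ∀ J : Set U, MeasurableSet (p ⁻¹' J) := by
    intro J
    have := hp (fun j => {_z | j ∈ J}) (fun j => isOpen_const)
    exact this
  have hrank : ∀ j, ∃ a < (Ordinal.omega 1 : Ordinal.{0}),
      S j ∈ MeasurableSpace.generateMeasurableRec {s : Set U | IsOpen s} a := by
    intro j
    have h := hS j
    rw [BorelSpace.measurable_eq (α := U)] at h
    have h' : S j ∈ {t | MeasurableSpace.GenerateMeasurable {s : Set U | IsOpen s} t} := h
    rw [MeasurableSpace.generateMeasurable_eq_rec.{_, 0},
      MeasurableSpace.generateMeasurableRec_omega_one] at h'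
    simpa only [Set.mem_iUnion, exists_prop] using h'
  choose r hr hSr using hrank
  obtain ⟨a, ha, h0⟩ := rb_ulam μ (fun z => r (p z)) (fun z => hr _)
    (fun A => hpre (r ⁻¹' A))
  have hM : MeasurableSet {z | z ∈ (if r (p z) ≤ a then S (p z) else ∅)} := by
    refine rb_rec p hp a ha (fun j => if r j ≤ a then S j else ∅) fun j => ?_
    split_ifs with h
    · exact MeasurableSpace.generateMeasurableRec_mono _ h (hSr j)
    · exact MeasurableSpace.empty_mem_generateMeasurableRec _ _
  refine hM.nullMeasurableSet.congr ?_
  have hae : ∀ᵐ z ∂μ, r (p z) ≤ a := by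
    rw [ae_iff]; simpa using h0
  filter_upwards [hae] with z hz
  apply propext
  change z ∈ (if r (p z) ≤ a then S (p z) else ∅) ↔ z ∈ S (p z)
  rw [if_pos hz]

theorem rb_recurrence_null {U : Type*} [MetricSpace U] [MeasurableSpace U] [BorelSpace U]
    (μ : Measure U) [IsFiniteMeasure μ] (g : U → U) (hg : Measurable g) (ε : ℝ) :
    NullMeasurableSet {z | dist (g z) z ≤ ε} μ := by
  let d : ℕ → ℝ := fun n => 1 / ((n : ℝ) + 1)
  have hd : ∀ n, 0 < d n := fun n => Nat.one_div_pos_of_nat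
  have hex : ∀ n, ∃ p : U → U, (∀ z, dist z (p z) < d n) ∧
      ∀ z j, WellOrderingRel j (p z) → d n ≤ dist z j :=
    fun n => rb_exists_center (d n) (hd n)
  choose p h1 h2 using hex
  have heq : {z | dist (g z) z ≤ ε} = ⋂ n, {z | dist (g z) (p n z) ≤ ε + d n} := by
    ext z
    simp only [Set.mem_setOf_eq, Set.mem_iInter]
    constructor
    · intro h n
      linarith [dist_triangle (g z) z (p n z), h1 n z]
    · intro h
      refine le_of_forall_pos_le_add fun e he => ?_
      obtain ⟨n, hn⟩ := exists_nat_one_div_lt (half_pos he)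
      have hn' : d n < e / 2 := hn
      linarith [dist_triangle_right (g z) z (p n z), h1 n z, h n]
  rw [heq]
  refine NullMeasurableSet.iInter fun n => ?_
  refine rb_null μ (p n) (rb_open (d n) (p n) (h1 n) (h2 n))
    (fun j => {z | dist (g z) j ≤ ε + d n}) fun j => ?_
  have : {z | dist (g z) j ≤ ε + d n} = g ⁻¹' closedBall j (ε + d n) := rfl
  rw [this]
  exact hg isClosed_closedBall.measurableSet

/-- **Recurrence bound via an induced measurable partition.**
Let `(U, d)` be a metric space, `μ` a Borel probability measure, `g : U → U` Borel,
`ℓ : U → (0, ∞)` measurable, and `(μ_x)` a disintegration of `μ`.  Let `C ≥ 1`, `b > 0`,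
`k > 0`, `c ∈ [0, 1/2]` and `(Γ x)` Borel sets with `μ_x (Γ x) = 1`.  Assume
(i) `μ {ℓ < ε} ≤ C ε^b` for `ε ∈ (0,1)`; (ii) `g` is `c`-Lipschitz on each `Γ x`;
(iii) `μ_x S ≤ C (δ / ℓ x)^k` whenever `diam S ≤ δ`.  Then for every `ε ∈ (0,1)`,
`μ {z : d(g z, z) ≤ ε} ≤ C (1 + 4^k) ε^{bk/(b+k)}`. -/
theorem recurrence_bound_induced_partition {U : Type*} [MetricSpace U] [MeasurableSpace U]
    [BorelSpace U] (μ : Measure U) [IsProbabilityMeasure μ]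
    (g : U → U) (hg : Measurable g)
    (ℓ : U → ℝ) (hℓmeas : Measurable ℓ) (hℓpos : ∀ x, 0 < ℓ x)
    (μx : U → Measure U) (hμxprob : ∀ x, IsProbabilityMeasure (μx x))
    (hdisint : ∀ S : Set U, MeasurableSet S → μ S = ∫⁻ x, μx x S ∂μ)
    (C b k c : ℝ) (hC : 1 ≤ C) (hb : 0 < b) (hk : 0 < k) (hc0 : 0 ≤ c) (hc : c ≤ 1 / 2)
    (Γ : U → Set U) (hΓmeas : ∀ x, MeasurableSet (Γ x)) (hΓfull : ∀ x, μx x (Γ x) = 1)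
    (hi : ∀ ε : ℝ, 0 < ε → ε < 1 → μ {x | ℓ x < ε} ≤ ENNReal.ofReal (C * ε ^ b))
    (hii : ∀ x : U, ∀ y ∈ Γ x, ∀ y' ∈ Γ x, dist (g y) (g y') ≤ c * dist y y')
    (hiii : ∀ x : U, ∀ δ : ℝ, 0 < δ → ∀ S : Set U, MeasurableSet S → diam S ≤ δ →
      μx x S ≤ ENNReal.ofReal (C * (δ / ℓ x) ^ k)) :
    ∀ ε : ℝ, 0 < ε → ε < 1 →
      μ {z | dist (g z) z ≤ ε} ≤
        ENNReal.ofReal (C * (1 + 4 ^ k) * ε ^ (b * k / (b + k))) := by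
  intro ε hε hε1
  obtain ⟨B, hBsub, hB, hBae⟩ :=
    (rb_recurrence_null μ g hg ε).exists_measurable_subset_ae_eq
  rw [← measure_congr hBae, hdisint B hB]
  have hbk : 0 < b + k := by linarith
  set t : ℝ := ε ^ (k / (b + k)) with ht
  have ht0 : 0 < t := Real.rpow_pos_of_pos hε _
  have ht1 : t < 1 := Real.rpow_lt_one hε.le hε1 (div_pos hk hbk)
  have hC0 : 0 ≤ C := by linarith
  have hpt : ∀ x, μx x B ≤ ENNReal.ofReal (C * (4 * ε / ℓ x) ^ k) := by
    intro x
    have hp := hμxprob x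
    have h1 : μx x B ≤ μx x (B ∩ Γ x) := by
      have hc : μx x (Γ x)ᶜ = 0 := (prob_compl_eq_zero_iff (hΓmeas x)).2 (hΓfull x)
      rw [measure_inter_conull hc]
    refine h1.trans (hiii x (4 * ε) (by linarith) _ (hB.inter (hΓmeas x)) ?_)
    refine diam_le_of_forall_dist_le (by linarith) ?_
    rintro y ⟨hyB, hyΓ⟩ y' ⟨hyB', hyΓ'⟩
    have a1 : dist (g y) y ≤ ε := hBsub hyB
    have a2 : dist (g y') y' ≤ ε := hBsub hyB'
    have a3 := hii x y hyΓ y' hyΓ'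
    have a4 : c * dist y y' ≤ 1 / 2 * dist y y' := mul_le_mul_of_nonneg_right hc dist_nonneg
    have a5 := dist_triangle4 y (g y) (g y') y'
    rw [dist_comm y (g y)] at a5
    linarith
  have hset : MeasurableSet {x | ℓ x < t} := measurableSet_lt hℓmeas measurable_const
  have hpt2 : ∀ x, μx x B ≤ Set.indicator {x | ℓ x < t} (fun _ => (1 : ENNReal)) x +
      ENNReal.ofReal (C * (4 * ε / t) ^ k) := by
    intro x
    by_cases hx : ℓ x < t
    · have hp := hμxprob x
      rw [Set.indicator_of_mem (show x ∈ {x | ℓ x < t} from hx)]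
      exact prob_le_one.trans le_self_add
    · refine (hpt x).trans (le_trans (ENNReal.ofReal_le_ofReal ?_) le_add_self)
      have hx' : t ≤ ℓ x := not_lt.1 hx
      have := hℓpos x
      gcongr
  refine (lintegral_mono hpt2).trans ?_
  rw [lintegral_add_right _ measurable_const, lintegral_indicator_const hset, lintegral_const,
    measure_univ, one_mul, mul_one]
  refine (add_le_add_left (hi t ht0 ht1) _).trans ?_
  rw [← ENNReal.ofReal_add (by positivity) (by positivity)]
  refine ENNReal.ofReal_le_ofReal (le_of_eq ?_)
  have e1 : t ^ b = ε ^ (b * k / (b + k)) := by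
    rw [ht, ← Real.rpow_mul hε.le]; congr 1; ring
  have e2 : (4 * ε / t) ^ k = 4 ^ k * ε ^ (b * k / (b + k)) := by
    rw [mul_div_assoc, Real.mul_rpow (by norm_num) (by positivity)]
    congr 1
    have : ε / t = ε ^ (b / (b + k)) := by
      rw [ht]
      nth_rewrite 1 [← Real.rpow_one ε]
      rw [← Real.rpow_sub hε]
      congr 1
      field_simp
      ring
    rw [this, ← Real.rpow_mul hε.le]; congr 1; ring
  rw [e1, e2]
  ring
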